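/- arXiv:2311.03574 — 4 statements merged into one kernel-verified Lean document; each statement's English description precedes it below -/
import Mathlib

section
/- The union of multisets of fuzzy values is associative up to equivalence: for all multisets of fuzzy values S, T, and U, (S ∪ T) ∪ U ≡ S ∪ (T ∪ U). -/
/-!
The `k`-th largest element of `S ∪ T` is `S[k] ∨ T[k]`: the sequence `k ↦ S[k] ∨ T[k]` is
nonincreasing, so listing its first `max |S| |T|` terms already sorts the union
(`FuzzyMS.nth_map_range`), and beyond that index both sides are `0`. Hence both bracketings
list the values `S[k] ∨ T[k] ∨ U[k]` for `k ≤ max |S| |T| |U|`, and associativity of `∨` and of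
`max` gives an equality of multisets, which is stronger than equivalence.
-/

/-- The `k`-th largest element (1-indexed) of a finite multiset of fuzzy values,
with the convention that it is `0` when `k` exceeds the cardinality. -/
noncomputable def FuzzyMS.nth (S : Multiset unitInterval) (k : ℕ) : unitInterval :=
  ((S.sort (· ≤ ·)).reverse).getD (k - 1) 0

/-- Equivalence of multisets of fuzzy values: equal multiplicities on `(0,1]`. -/
noncomputable def FuzzyMS.Equiv (S T : Multiset unitInterval) : Prop :=
  ∀ x : unitInterval, 0 < x → S.count x = T.count x

/-- Fuzzy union: `{S[1] ∨ T[1], …, S[n] ∨ T[n]}` where `n = max(|S|,|T|)`. -/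
noncomputable def FuzzyMS.union (S T : Multiset unitInterval) : Multiset unitInterval :=
  (Multiset.range (max (Multiset.card S) (Multiset.card T))).map
    (fun i => FuzzyMS.nth S (i + 1) ⊔ FuzzyMS.nth T (i + 1))

/-- Fuzzy intersection: `{S[1] ∧ T[1], …, S[n] ∧ T[n]}` where `n = max(|S|,|T|)`. -/
noncomputable def FuzzyMS.inter (S T : Multiset unitInterval) : Multiset unitInterval :=
  (Multiset.range (max (Multiset.card S) (Multiset.card T))).map
    (fun i => FuzzyMS.nth S (i + 1) ⊓ FuzzyMS.nth T (i + 1))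

/-- Fuzzy difference: `{S[1]·δ₁, …, S[m]·δ_m}` with `m = |S|`,
`δ_k = 1` if `S[k] > T[k]` and `δ_k = 0` otherwise. -/
noncomputable def FuzzyMS.diff (S T : Multiset unitInterval) : Multiset unitInterval :=
  (Multiset.range (Multiset.card S)).map
    (fun i => if FuzzyMS.nth T (i + 1) < FuzzyMS.nth S (i + 1) then FuzzyMS.nth S (i + 1) else 0)

/-- `S ⊆ T` iff there exists `R` with `S ∪ R ≡ T`. (The disjoint union `S ⊎ T` is `S + T`.) -/
noncomputable def FuzzyMS.Subset (S T : Multiset unitInterval) : Prop :=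
  ∃ R : Multiset unitInterval, FuzzyMS.Equiv (FuzzyMS.union S R) T

/-- `Count≥c(S)`: the number of elements of `S` (with multiplicity) that are `≥ c`. -/
noncomputable def FuzzyMS.countGe (c : unitInterval) (S : Multiset unitInterval) : ℕ :=
  (S.filter (fun x => c ≤ x)).card

theorem FuzzyMS.nth_eq_zero (S : Multiset unitInterval) {i : ℕ} (h : S.card ≤ i) :
    FuzzyMS.nth S (i + 1) = 0 := by
  unfold FuzzyMS.nth
  rw [List.getD_eq_default]
  simpa using h

theorem FuzzyMS.nth_antitone (S : Multiset unitInterval) :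
    Antitone fun i => FuzzyMS.nth S (i + 1) := by
  intro i j hij
  rcases le_or_gt S.card j with hj | hj
  · simp only [FuzzyMS.nth_eq_zero S hj]
    exact unitInterval.nonneg'
  · have hs : ((S.sort (· ≤ ·)).reverse).Pairwise (· ≥ ·) :=
      List.pairwise_reverse.mpr (Multiset.pairwise_sort S (· ≤ ·))
    have hl : ((S.sort (· ≤ ·)).reverse).length = S.card := by simp
    simp only [FuzzyMS.nth, Nat.add_sub_cancel]
    rw [List.getD_eq_getElem _ _ (by omega), List.getD_eq_getElem _ _ (by omega)]
    rcases hij.eq_or_lt with rfl | hlt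
    · exact le_rfl
    · exact List.pairwise_iff_getElem.mp hs i j (by omega) (by omega) hlt

/-- A nonincreasing sequence is its own decreasing rearrangement, so `nth` reads off its terms. -/
theorem FuzzyMS.nth_map_range {f : ℕ → unitInterval} (hf : Antitone f) {n i : ℕ} (hi : i < n) :
    FuzzyMS.nth ((Multiset.range n).map f) (i + 1) = f i := by
  have hsort : (((Multiset.range n).map f).sort (· ≤ ·)).reverse = (List.range n).map f := by
    refine List.Perm.eq_of_pairwise' (r := (· ≥ ·)) ?_ ?_ ?_
    · exact List.pairwise_reverse.mpr (Multiset.pairwise_sort _ (· ≤ ·))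
    · exact List.pairwise_map.mpr (List.pairwise_lt_range.imp fun h => hf h.le)
    · refine (List.reverse_perm _).trans (Multiset.coe_eq_coe.mp ?_)
      rw [Multiset.sort_eq]
      rfl
  unfold FuzzyMS.nth
  rw [hsort, Nat.add_sub_cancel, List.getD_eq_getElem _ _ (by simpa using hi)]
  simp

theorem FuzzyMS.card_union (S T : Multiset unitInterval) :
    (FuzzyMS.union S T).card = max S.card T.card := by
  simp [FuzzyMS.union]

/-- The identity `(S ∪ T)[k] = S[k] ∨ T[k]`, valid for every `k ≥ 1`. -/
theorem FuzzyMS.nth_union (S T : Multiset unitInterval) (i : ℕ) :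
    FuzzyMS.nth (FuzzyMS.union S T) (i + 1) =
      FuzzyMS.nth S (i + 1) ⊔ FuzzyMS.nth T (i + 1) := by
  rcases lt_or_ge i (max S.card T.card) with hi | hi
  · exact FuzzyMS.nth_map_range
      (f := fun i => FuzzyMS.nth S (i + 1) ⊔ FuzzyMS.nth T (i + 1))
      ((FuzzyMS.nth_antitone S).sup (FuzzyMS.nth_antitone T)) hi
  · rw [FuzzyMS.nth_eq_zero _ (by rwa [FuzzyMS.card_union]),
      FuzzyMS.nth_eq_zero S (le_trans (le_max_left _ _) hi),
      FuzzyMS.nth_eq_zero T (le_trans (le_max_right _ _) hi), sup_idem]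

theorem union_assoc (S T U : Multiset unitInterval) :
    FuzzyMS.Equiv (FuzzyMS.union (FuzzyMS.union S T) U)
      (FuzzyMS.union S (FuzzyMS.union T U)) := by
  have h : FuzzyMS.union (FuzzyMS.union S T) U = FuzzyMS.union S (FuzzyMS.union T U) := by
    rw [FuzzyMS.union, FuzzyMS.union.eq_1 S (FuzzyMS.union T U)]
    simp only [FuzzyMS.card_union, FuzzyMS.nth_union, max_assoc]
  intro x _
  rw [h]
end

section
/- Intersection distributes over disjoint union up to equivalence: for all multisets of fuzzy values S, T, and U, S ⊎ (T ∩ U) ≡ (S ⊎ T) ∩ (S ⊎ U). -/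
open Classical in
lemma FuzzyMS.getD_iff (p : unitInterval → Prop) (hp : Monotone p) (h0 : ¬ p 0)
    (l : List unitInterval) (hl : l.Pairwise (fun a b => b ≤ a)) (i : ℕ) :
    p (l.getD i 0) ↔ i < l.countP (fun x => p x) := by
  induction l generalizing i with
  | nil => simpa using h0
  | cons a l ih =>
    rw [List.pairwise_cons] at hl
    by_cases ha : p a
    · cases i with
      | zero => simp [ha]
      | succ i => simpa [ha, List.countP_cons] using ih hl.2 i
    -- the head is the largest element, so no element satisfies `p`
    · have hall : ∀ b ∈ l, ¬ p b := fun b hb hpb => ha (hp (hl.1 b hb) hpb)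
      have hc : (a :: l).countP (fun x => p x) = 0 := by
        rw [List.countP_eq_zero]
        simpa [ha] using hall
      rw [hc]
      cases i with
      | zero => simpa using ha
      | succ i =>
        have hz : l.countP (fun x => p x) = 0 := by
          rw [List.countP_eq_zero]
          simpa using hall
        simpa [hz] using ih hl.2 i

open Classical in
lemma FuzzyMS.nth_iff (p : unitInterval → Prop) (hp : Monotone p) (h0 : ¬ p 0)
    (S : Multiset unitInterval) (i : ℕ) :
    p (FuzzyMS.nth S (i + 1)) ↔ i < S.countP p := by
  have hs : ((S.sort (· ≤ ·)).reverse).Pairwise (fun a b => b ≤ a) :=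
    List.pairwise_reverse.2 (S.pairwise_sort (· ≤ ·))
  have h := FuzzyMS.getD_iff p hp h0 _ hs i
  have hc : S.countP p = (S.sort (· ≤ ·)).countP (fun x => p x) := by
    conv_lhs => rw [← S.sort_eq (· ≤ ·)]
    rw [Multiset.coe_countP]
  rw [List.countP_reverse] at h
  rw [hc]
  exact h

open Classical in
lemma FuzzyMS.countP_inter (p : unitInterval → Prop) (hp : Monotone p) (h0 : ¬ p 0)
    (S T : Multiset unitInterval) :
    (FuzzyMS.inter S T).countP p = min (S.countP p) (T.countP p) := by
  have hinf : ∀ a b : unitInterval, p (a ⊓ b) ↔ p a ∧ p b := fun a b =>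
    ⟨fun h => ⟨hp inf_le_left h, hp inf_le_right h⟩, fun h => by
      rcases min_choice a b with e | e <;> rw [e]
      exacts [h.1, h.2]⟩
  have hS := S.countP_le_card p
  have hT := T.countP_le_card p
  unfold FuzzyMS.inter
  rw [Multiset.countP_map]
  simp only [hinf, FuzzyMS.nth_iff p hp h0]
  have : (Finset.range (max S.card T.card)).filter
      (fun i => i < S.countP p ∧ i < T.countP p) =
      Finset.range (min (S.countP p) (T.countP p)) := by
    ext i
    simp only [Finset.mem_filter, Finset.mem_range]
    omega
  have hcard := congrArg Finset.card this
  rw [Finset.card_range] at hcard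
  rw [← hcard, Finset.card_def, Finset.filter_val, Finset.range_val]

open Classical in
lemma FuzzyMS.countP_le_eq (x : unitInterval) (S : Multiset unitInterval) :
    S.countP (x ≤ ·) = S.count x + S.countP (x < ·) := by
  induction S using Multiset.induction_on with
  | empty => simp
  | cons a S ih =>
    rw [Multiset.countP_cons, Multiset.countP_cons, Multiset.count_cons, ih]
    rcases lt_trichotomy x a with h | h | h
    · simp [h, h.le, h.ne]; omega
    · simp [h]; omega
    · simp [h.not_ge, h.not_gt, h.ne']

theorem inter_distrib_add (S T U : Multiset unitInterval) :
    FuzzyMS.Equiv (S + FuzzyMS.inter T U)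
      (FuzzyMS.inter (S + T) (S + U)) := by
  classical
  intro x hx
  have key : ∀ p : unitInterval → Prop, Monotone p → ¬ p 0 →
      (S + FuzzyMS.inter T U).countP p = (FuzzyMS.inter (S + T) (S + U)).countP p := by
    intro p hp h0
    rw [FuzzyMS.countP_inter p hp h0, Multiset.countP_add, Multiset.countP_add,
      Multiset.countP_add, FuzzyMS.countP_inter p hp h0]
    omega
  have h1 := key (x ≤ ·) (fun a b hab h => le_trans h hab) hx.not_ge
  have h2 := key (x < ·) (fun a b hab h => lt_of_lt_of_le h hab) (not_lt.2 hx.le)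
  rw [FuzzyMS.countP_le_eq, FuzzyMS.countP_le_eq, h2] at h1
  convert Nat.add_right_cancel h1
end

section
/- For all multisets of fuzzy values S and T and every c ∈ (0,1], Count≥c(S ∩ T) = min(Count≥c(S), Count≥c(T)) and Count≥c(S ∪ T) = max(Count≥c(S), Count≥c(T)). -/
/-- In a decreasing list the entries `≥ c` come first. Positivity of `c` rules out the default
value `0` beyond the end of the list. -/
theorem FuzzyMS.le_getD_iff (c : unitInterval) (hc : 0 < c) (l : List unitInterval)
    (hl : l.Pairwise (· ≥ ·)) (i : ℕ) :
    c ≤ l.getD i 0 ↔ i < l.countP (fun x => decide (c ≤ x)) := by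
  induction l generalizing i with
  | nil => simpa using hc.ne'
  | cons a l ih =>
    rw [List.pairwise_cons] at hl
    obtain ⟨ha, hl⟩ := hl
    by_cases hca : c ≤ a
    · cases i with
      | zero => simp [hca]
      | succ i => simpa [hca] using ih hl i
    · -- The head is below `c`, hence so is every later entry, and the count is zero.
      have h0 : l.countP (fun x => decide (c ≤ x)) = 0 := by
        rw [List.countP_eq_zero]
        intro x hx hcx
        exact hca ((of_decide_eq_true hcx).trans (ha x hx))
      cases i with
      | zero => simp [hca, h0]
      | succ i =>
        have := ih hl i
        rw [h0] at this
        simpa [hca, h0] using this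

theorem FuzzyMS.le_nth_succ_iff (c : unitInterval) (hc : 0 < c) (S : Multiset unitInterval)
    (i : ℕ) : c ≤ FuzzyMS.nth S (i + 1) ↔ i < FuzzyMS.countGe c S := by
  have hs : ((S.sort (· ≤ ·)).reverse).Pairwise (· ≥ ·) :=
    List.pairwise_reverse.2 (S.pairwise_sort (· ≤ ·))
  have hcount : FuzzyMS.countGe c S
      = ((S.sort (· ≤ ·)).reverse).countP (fun x => decide (c ≤ x)) := by
    rw [List.countP_reverse, FuzzyMS.countGe, ← Multiset.countP_eq_card_filter,
      ← Multiset.coe_countP, Multiset.sort_eq]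
  rw [hcount, FuzzyMS.nth, Nat.add_sub_cancel]
  exact FuzzyMS.le_getD_iff c hc _ hs i

theorem FuzzyMS.countGe_le_card (c : unitInterval) (S : Multiset unitInterval) :
    FuzzyMS.countGe c S ≤ Multiset.card S :=
  Multiset.card_le_card (Multiset.filter_le _ _)

/-- If the terms `≥ c` of a finite sequence of length `n` are exactly the first `m ≤ n` ones, then
`Count≥c` of the multiset of its terms is `m`. -/
theorem FuzzyMS.countGe_map_range (c : unitInterval) (f : ℕ → unitInterval) (n m : ℕ)
    (hmn : m ≤ n) (h : ∀ i, c ≤ f i ↔ i < m) :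
    FuzzyMS.countGe c ((Multiset.range n).map f) = m := by
  rw [FuzzyMS.countGe, Multiset.filter_map, Multiset.card_map]
  have : (Finset.range n).filter (fun i => c ≤ f i) = Finset.range m := by
    ext i
    simp only [Finset.mem_filter, Finset.mem_range, h]
    omega
  exact (congrArg Finset.card this).trans (Finset.card_range m)

theorem countGe_inter_union (S T : Multiset unitInterval) (c : unitInterval) (hc : 0 < c) :
    FuzzyMS.countGe c (FuzzyMS.inter S T) = min (FuzzyMS.countGe c S) (FuzzyMS.countGe c T) ∧
      FuzzyMS.countGe c (FuzzyMS.union S T) = max (FuzzyMS.countGe c S) (FuzzyMS.countGe c T) := by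
  have hS := FuzzyMS.countGe_le_card c S
  have hT := FuzzyMS.countGe_le_card c T
  constructor
  · refine FuzzyMS.countGe_map_range c _ _ _ (by omega) fun i => ?_
    rw [le_inf_iff, FuzzyMS.le_nth_succ_iff c hc, FuzzyMS.le_nth_succ_iff c hc, lt_min_iff]
  · refine FuzzyMS.countGe_map_range c _ _ _ (by omega) fun i => ?_
    rw [le_sup_iff, FuzzyMS.le_nth_succ_iff c hc, FuzzyMS.le_nth_succ_iff c hc, lt_max_iff]
end

section
/- For all multisets of fuzzy values S and T, S ⊆ T if and only if S[k] ≤ T[k] for every integer k ≥ 1. -/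
namespace FuzzyMS

lemma le_getD_iff_s9 (c : unitInterval) (hc : 0 < c) (L : List unitInterval)
    (hL : L.Pairwise (· ≥ ·)) (k : ℕ) :
    c ≤ L.getD k 0 ↔ k < L.countP (fun x => decide (c ≤ x)) := by
  induction L generalizing k with
  | nil => simpa using hc.ne'
  | cons a L ih =>
    rw [List.pairwise_cons] at hL
    by_cases ha : c ≤ a
    · cases k with
      | zero => simp [ha]
      | succ k => simpa [ha] using ih hL.2 k
    · -- Every later entry is at most `a < c`, so both sides are false.
      have h0 : L.countP (fun x => decide (c ≤ x)) = 0 := by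
        rw [List.countP_eq_zero]
        intro x hx hcx
        exact ha ((of_decide_eq_true hcx).trans (hL.1 x hx))
      cases k with
      | zero => simp [ha, h0]
      | succ k => simpa [ha, h0] using ih hL.2 k

/-- The Galois-type relation between ranked elements and threshold counts. The hypothesis `0 < c`
is needed because of the convention that `S[k] = 0` beyond the cardinality. -/
lemma le_nth_iff (c : unitInterval) (hc : 0 < c) (S : Multiset unitInterval) (k : ℕ) :
    c ≤ nth S (k + 1) ↔ k < countGe c S := by
  have hL : (S.sort (· ≤ ·)).reverse.Pairwise (· ≥ ·) := by
    rw [List.pairwise_reverse]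
    exact S.pairwise_sort (· ≤ ·)
  have h := le_getD_iff_s9 c hc _ hL k
  have hcount : countGe c S = (S.sort (· ≤ ·)).reverse.countP (fun x => decide (c ≤ x)) := by
    rw [countGe, ← Multiset.countP_eq_card_filter, List.countP_reverse]
    conv_lhs => rw [← Multiset.sort_eq S (· ≤ ·)]
    rw [Multiset.coe_countP]
  rw [hcount]
  exact h

lemma map_getD_range (L : List unitInterval) (m : ℕ) :
    (List.range (L.length + m)).map (fun i => L.getD i 0) = L ++ List.replicate m 0 := by
  apply List.ext_getElem
  · simp
  · intro i h1 h2
    rw [List.getElem_map, List.getElem_range, List.getElem_append]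
    split_ifs with h
    · simp [h]
    · simp [List.getElem?_eq_none (not_lt.mp h)]

/-- Listing the `n` largest elements of `S` with `n ≥ |S|` gives `S` padded by zeros. -/
lemma map_nth_range (S : Multiset unitInterval) (n : ℕ) (hn : S.card ≤ n) :
    (Multiset.range n).map (fun i => nth S (i + 1)) = S + Multiset.replicate (n - S.card) 0 := by
  have h := map_getD_range (S.sort (· ≤ ·)).reverse (n - S.card)
  have hlen : (S.sort (· ≤ ·)).reverse.length + (n - S.card) = n := by
    simp only [List.length_reverse, Multiset.length_sort]
    omega
  rw [hlen] at h
  have h' := congrArg (fun l : List unitInterval => (l : Multiset unitInterval)) h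
  simp only [← Multiset.coe_add, Multiset.coe_reverse, Multiset.sort_eq,
    Multiset.coe_replicate] at h'
  exact h'

lemma countGe_congr {S T : Multiset unitInterval} (h : Equiv S T) {c : unitInterval}
    (hc : 0 < c) : countGe c S = countGe c T := by
  unfold countGe
  congr 1
  ext x
  by_cases hx : c ≤ x
  · simp [Multiset.count_filter, hx, h x (hc.trans_le hx)]
  · simp [Multiset.count_filter, hx]

lemma countGe_le_union (S R : Multiset unitInterval) (c : unitInterval) :
    countGe c S ≤ countGe c (union S R) := by
  have h1 : countGe c S ≤ countGe c
      ((Multiset.range (max S.card R.card)).map (fun i => nth S (i + 1))) := by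
    rw [map_nth_range S _ (le_max_left _ _)]
    simp [countGe, Multiset.filter_add]
  refine h1.trans ?_
  simp only [countGe, union, Multiset.filter_map, Multiset.card_map]
  exact Multiset.card_le_card
    (Multiset.monotone_filter_right _ fun i hi => le_trans hi le_sup_left)

end FuzzyMS

theorem subset_iff_nth_le (S T : Multiset unitInterval) :
    FuzzyMS.Subset S T ↔ ∀ k : ℕ, 1 ≤ k → FuzzyMS.nth S k ≤ FuzzyMS.nth T k := by
  constructor
  · rintro ⟨R, hR⟩ k hk
    obtain ⟨k, rfl⟩ := Nat.exists_eq_add_of_le' hk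
    rcases eq_or_lt_of_le (show 0 ≤ FuzzyMS.nth S (k + 1) from unitInterval.nonneg') with h0 | hc
    · rw [← h0]
      exact unitInterval.nonneg'
    · rw [FuzzyMS.le_nth_iff _ hc, ← FuzzyMS.countGe_congr hR hc]
      exact ((FuzzyMS.le_nth_iff _ hc S k).mp le_rfl).trans_le (FuzzyMS.countGe_le_union S R _)
  · intro h
    refine ⟨T, fun x hx => ?_⟩
    have hU : FuzzyMS.union S T = (Multiset.range (max S.card T.card)).map
        (fun i => FuzzyMS.nth T (i + 1)) :=
      Multiset.map_congr rfl fun i _ => sup_eq_right.mpr (h (i + 1) (by omega))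
    rw [hU, FuzzyMS.map_nth_range T _ (le_max_right _ _), Multiset.count_add,
      Multiset.count_replicate, if_neg hx.ne, add_zero]
end
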